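/- Let N ≥ 3, 1 ≤ p < N, q > p* := Np/(N−p), and set S := inf{‖u‖_{D^{1,p}}^p : u ∈ D^{1,p}(ℤ^N), ‖u‖_q = 1}. Let {u_n} ⊂ D^{1,p}(ℤ^N) be a minimizing sequence, i.e. ‖u_n‖_q = 1 and ‖u_n‖_{D^{1,p}}^p → S. Then liminf_{n→∞} ‖u_n‖_∞ > 0. -/

import Mathlib

/-!
The theorem follows from the discrete Sobolev inequality at the critical exponent: if `u ∈ D^{1,p}`
and `‖u‖_{D^{1,p}}^p ≤ M`, then `∑ |u|^{p*} ≤ B` with `B` depending only on `N`, `p`, `M`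
(`exists_critical_bound`).  A minimizing sequence has bounded energy, and by interpolation
`1 = ∑ |u_n|^q ≤ ‖u_n‖_∞^{q - p*} ∑ |u_n|^{p*} ≤ B ‖u_n‖_∞^{q - p*}`,
so `‖u_n‖_∞` is bounded below.

The Sobolev inequality is proved as in the continuum.  For `p = 1`, telescoping along each
coordinate line bounds `|v|` by the total variation on that line, and Mathlib's grid-lines lemma
(the Loomis–Whitney type inequality behind Gagliardo–Nirenberg–Sobolev), applied to counting
measure, gives `∑ |v|^{N/(N-1)} ≤ (∑ |∇v|)^{N/(N-1)}` (`tsum_rpow_le_gradient`).  For general `p`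
this is applied to `v = |u|^γ` with `γ = p(N-1)/(N-p)`, and Hölder's inequality bounds the right-hand
side by a multiple of `(∑ |u|^{p*})^θ` with `θ < 1`; finiteness of `∑ |u|^{p*}` allows absorption.
-/

open Filter Topology

noncomputable section

/-- The vertex set of the `N`-dimensional integer lattice graph. -/
abbrev ZN (N : ℕ) := Fin N → ℤ

/-- Adjacency in the lattice graph `ℤ^N`: `x ∼ y` iff `Σ_k |x k - y k| = 1`. -/
def adj {N : ℕ} (x y : ZN N) : Prop := (∑ k, |x k - y k|) = 1

/-- `|∇u(x)|_p^p = Σ_{y∼x} |u(y)-u(x)|^p`. -/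
def gradPow {N : ℕ} (p : ℝ) (u : ZN N → ℝ) (x : ZN N) : ℝ :=
  ∑' y : {y : ZN N // adj x y}, |u y.1 - u x| ^ p

/-- `‖u‖_{D^{1,p}}^p = Σ_x |∇u(x)|_p^p`. -/
def DSumPow {N : ℕ} (p : ℝ) (u : ZN N → ℝ) : ℝ := ∑' x, gradPow p u x

/-- `‖u‖_{D^{1,p}}`. -/
def Dnorm {N : ℕ} (p : ℝ) (u : ZN N → ℝ) : ℝ := DSumPow p u ^ (1 / p)

/-- `‖u‖_q = (Σ_x |u(x)|^q)^{1/q}`. -/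
def lpNorm {N : ℕ} (q : ℝ) (u : ZN N → ℝ) : ℝ := (∑' x, |u x| ^ q) ^ (1 / q)

/-- `u ∈ ℓ^q(ℤ^N)`. -/
def Memlp {N : ℕ} (q : ℝ) (u : ZN N → ℝ) : Prop := Summable fun x => |u x| ^ q

/-- `u ∈ D^{1,p}(ℤ^N)`, identified with `{u ∈ ℓ^{p*} : ‖u‖_{D^{1,p}} < ∞}`. -/
def MemD {N : ℕ} (p pstar : ℝ) (u : ZN N → ℝ) : Prop :=
  Memlp pstar u ∧ Summable fun x => gradPow p u x

/-- `‖u‖_∞ = sup_x |u(x)|`. -/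
def supNorm {N : ℕ} (u : ZN N → ℝ) : ℝ := ⨆ x, |u x|

open scoped ENNReal

/-! ### Adjacency in the lattice -/

instance finite_neighbours {N : ℕ} (x : ZN N) : Finite {y : ZN N // adj x y} := by
  refine Set.Finite.to_subtype (s := {y : ZN N | adj x y})
    ((Set.finite_Icc (fun k => x k - 1) (fun k => x k + 1)).subset ?_)
  intro y hy
  have h : ∀ k, |x k - y k| ≤ 1 := fun k => by
    have h1 : (∑ k, |x k - y k|) = 1 := hy
    rw [← h1]
    exact Finset.single_le_sum (f := fun k => |x k - y k|) (fun i _ => abs_nonneg _)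
      (Finset.mem_univ k)
  constructor <;> intro k <;> have := abs_le.1 (h k) <;> simp only <;> omega

lemma adj_add_single {N : ℕ} (x : ZN N) (i : Fin N) : adj x (x + Pi.single i 1) := by
  unfold adj
  rw [Finset.sum_eq_single i]
  · simp
  · intro j _ hj
    simp [hj]
  · simp

lemma gradPow_nonneg {N : ℕ} (p : ℝ) (u : ZN N → ℝ) (x : ZN N) : 0 ≤ gradPow p u x :=
  tsum_nonneg fun _ => Real.rpow_nonneg (abs_nonneg _) _

lemma diff_rpow_le_gradPow {N : ℕ} (p : ℝ) (u : ZN N → ℝ) (x : ZN N) (i : Fin N) :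
    |u (x + Pi.single i 1) - u x| ^ p ≤ gradPow p u x :=
  (Summable.of_finite (f := fun y : {y : ZN N // adj x y} => |u y.1 - u x| ^ p)).le_tsum
    ⟨x + Pi.single i 1, adj_add_single x i⟩ fun _ _ => Real.rpow_nonneg (abs_nonneg _) _

/-! ### The case `p = 1` -/

lemma abs_le_tsum_line (g : ℤ → ℝ) (hg : Tendsto g cofinite (𝓝 0)) (t : ℤ) :
    ENNReal.ofReal |g t| ≤ ∑' k : ℤ, ENNReal.ofReal |g (k + 1) - g k| := by
  have hinj : Function.Injective (fun n : ℕ => t + (n : ℤ)) := fun a b h => by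
    simpa using h
  have h1 : ∀ n : ℕ, ENNReal.ofReal |g t| ≤ ENNReal.ofReal |g (t + n)|
      + ∑' k : ℤ, ENNReal.ofReal |g (k + 1) - g k| := by
    intro n
    have hfin : ENNReal.ofReal |g t| ≤ ENNReal.ofReal |g (t + n)|
        + ∑ k ∈ Finset.range n, ENNReal.ofReal |g (t + k + 1) - g (t + k)| := by
      induction n with
      | zero => simp
      | succ n ih =>
        refine ih.trans ?_
        rw [Finset.sum_range_succ, add_comm (Finset.sum _ _), ← add_assoc]
        gcongr
        rw [← ENNReal.ofReal_add (abs_nonneg _) (abs_nonneg _)]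
        apply ENNReal.ofReal_le_ofReal
        push_cast
        rw [← add_assoc]
        have := abs_sub_abs_le_abs_sub (g (t + n)) (g (t + n + 1))
        rw [abs_sub_comm] at this
        linarith
    refine hfin.trans (add_le_add le_rfl ?_)
    refine (ENNReal.sum_le_tsum (f := fun k : ℕ =>
      ENNReal.ofReal |g (t + k + 1) - g (t + k)|) _).trans ?_
    exact ENNReal.tsum_comp_le_tsum_of_injective hinj
      (fun k : ℤ => ENNReal.ofReal |g (k + 1) - g k|)
  have h2 : Tendsto (fun n : ℕ => g (t + n)) atTop (𝓝 0) := by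
    rw [← Nat.cofinite_eq_atTop]
    exact hg.comp hinj.tendsto_cofinite
  have h3 : Tendsto (fun n : ℕ => ENNReal.ofReal |g (t + n)|
      + ∑' k : ℤ, ENNReal.ofReal |g (k + 1) - g k|) atTop
      (𝓝 (ENNReal.ofReal |(0 : ℝ)| + ∑' k : ℤ, ENNReal.ofReal |g (k + 1) - g k|)) :=
    (ENNReal.tendsto_ofReal h2.abs).add tendsto_const_nhds
  simpa using ge_of_tendsto' h3 h1

open MeasureTheory in
lemma pi_count (N : ℕ) :
    Measure.pi (fun _ : Fin N => (Measure.count : Measure ℤ)) = Measure.count := by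
  refine Measure.ext_of_singleton fun a => ?_
  rw [Measure.count_singleton, ← Set.univ_pi_singleton a, Measure.pi_pi]
  simp

open MeasureTheory in
/-- Discrete Gagliardo–Nirenberg–Sobolev inequality for `p = 1`, for functions vanishing at
infinity. -/
lemma tsum_rpow_le_gradient {N : ℕ} (hN : 2 ≤ N) (v : ZN N → ℝ)
    (hv : Tendsto v cofinite (𝓝 0)) :
    ∑' x, ENNReal.ofReal |v x| ^ ((N : ℝ) / (N - 1)) ≤
      (∑' x, ∑ i, ENNReal.ofReal |v (x + Pi.single i 1) - v x|) ^ ((N : ℝ) / (N - 1)) := by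
  have hN' : (1 : ℝ) < N := by exact_mod_cast hN
  set F : ZN N → ℝ≥0∞ := fun x => ∑ i, ENNReal.ofReal |v (x + Pi.single i 1) - v x|
  have hconj : Real.HolderConjugate (Fintype.card (Fin N) : ℝ) ((N : ℝ) / (N - 1)) := by
    rw [Fintype.card_fin]
    exact Real.HolderConjugate.conjExponent hN'
  have key := lintegral_prod_lintegral_pow_le
    (μ := fun _ : Fin N => (Measure.count : Measure ℤ)) hconj (f := F) (measurable_of_countable _)
  rw [pi_count, lintegral_count, lintegral_count] at key
  refine le_trans (ENNReal.tsum_le_tsum fun x => ?_) key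
  have hline : ∀ i, ENNReal.ofReal |v x| ≤
      ∫⁻ t, F (Function.update x i t) ∂(Measure.count : Measure ℤ) := by
    intro i
    rw [lintegral_count]
    have h := abs_le_tsum_line (fun k => v (Function.update x i k))
      (hv.comp (Function.update_injective x i).tendsto_cofinite) (x i)
    simp only [Function.update_eq_self] at h
    refine h.trans (ENNReal.tsum_le_tsum fun k => ?_)
    have hup : Function.update x i (k + 1) = Function.update x i k + Pi.single i 1 := by
      ext j
      by_cases hj : j = i
      · subst hj; simp
      · simp [hj]
    rw [hup]
    exact Finset.single_le_sum (f := fun j => ENNReal.ofReal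
      |v (Function.update x i k + Pi.single j 1) - v (Function.update x i k)|)
      (fun _ _ => zero_le) (Finset.mem_univ i)
  have hexp : (0 : ℝ) ≤ 1 / ((Fintype.card (Fin N) : ℝ) - 1) := by
    rw [Fintype.card_fin]
    exact div_nonneg zero_le_one (by linarith)
  calc ENNReal.ofReal |v x| ^ ((N : ℝ) / (N - 1))
      = ∏ _i : Fin N, ENNReal.ofReal |v x| ^ ((1 : ℝ) / ((Fintype.card (Fin N) : ℝ) - 1)) := by
        rw [Finset.prod_const, Finset.card_univ, Fintype.card_fin, ← ENNReal.rpow_natCast,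
          ← ENNReal.rpow_mul]
        congr 1
        ring
    _ ≤ _ := by
        gcongr with i
        exact hline i

/-! ### Hölder's inequality and the general exponent -/

lemma abs_rpow_sub_rpow_le {a b γ : ℝ} (ha : 0 ≤ a) (hb : 0 ≤ b) (hγ : 1 ≤ γ) :
    |a ^ γ - b ^ γ| ≤ γ * (a ^ (γ - 1) * |a - b| + b ^ (γ - 1) * |a - b|) := by
  wlog hab : b ≤ a generalizing a b
  · have := this hb ha (le_of_not_ge hab)
    rw [abs_sub_comm, abs_sub_comm a b]
    linarith
  have h0 : 0 ≤ γ * (b ^ (γ - 1) * |a - b|) := by positivity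
  rw [abs_of_nonneg (sub_nonneg.2 (Real.rpow_le_rpow hb hab (by linarith)))]
  rcases ha.eq_or_lt with rfl | ha
  · have : b = 0 := le_antisymm hab hb
    subst this
    simp
  have hB := one_add_mul_self_le_rpow_one_add (s := b / a - 1)
    (by have := div_nonneg hb ha.le; linarith) hγ
  rw [add_sub_cancel, Real.div_rpow hb ha.le, le_div_iff₀ (Real.rpow_pos_of_pos ha _)] at hB
  have h2 : a ^ γ = a ^ (γ - 1) * a := by
    rw [← Real.rpow_add_one ha.ne']; congr 1; ring
  have h3 : (1 + γ * (b / a - 1)) * a ^ γ = a ^ γ - γ * (a ^ (γ - 1) * (a - b)) := by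
    rw [h2]; field_simp; ring
  rw [abs_of_nonneg (sub_nonneg.2 hab)] at h0 ⊢
  linarith

/-- Hölder's inequality with exponents `p/(p-1)` and `p`, where `s = e * p/(p-1)`; phrased so as to
include `p = 1`, in which case `e = 0`. -/
lemma holder_aux {ι : Type*} {p s e A D : ℝ} (hp : 1 ≤ p) (he : e * p = s * (p - 1))
    (w d : ι → ℝ) (hw : ∀ x, 0 ≤ w x) (hd : ∀ x, 0 ≤ d x)
    (hws : Summable fun x => w x ^ s) (hds : Summable fun x => d x ^ p)
    (hA : ∑' x, w x ^ s ≤ A) (hD : ∑' x, d x ^ p ≤ D) :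
    (Summable fun x => w x ^ e * d x) ∧
      ∑' x, w x ^ e * d x ≤ A ^ (1 - 1 / p) * D ^ (1 / p) := by
  rcases hp.eq_or_lt with rfl | hp
  · have he : e = 0 := by simpa using he
    subst he
    simp only [Real.rpow_zero, one_mul, Real.rpow_one] at *
    refine ⟨hds, ?_⟩
    simpa using hD
  · have hp0 : p ≠ 0 := by linarith
    have hp1 : p - 1 ≠ 0 := by linarith
    have hconj : Real.HolderConjugate (p / (p - 1)) p :=
      (Real.HolderConjugate.conjExponent hp).symm
    have hpow : ∀ x, (w x ^ e) ^ (p / (p - 1)) = w x ^ s := fun x => by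
      rw [← Real.rpow_mul (hw x)]
      congr 1
      field_simp
      linarith
    have h := Real.summable_and_inner_le_Lp_mul_Lq_tsum_of_nonneg hconj
      (f := fun x => w x ^ e) (g := d) (fun x => Real.rpow_nonneg (hw x) _) hd
      (by simpa only [hpow] using hws) hds
    refine ⟨h.1, h.2.trans ?_⟩
    simp only [hpow]
    have e1 : 1 / (p / (p - 1)) = 1 - 1 / p := by field_simp
    rw [e1]
    have h0 : 0 ≤ ∑' x, w x ^ s := tsum_nonneg fun x => Real.rpow_nonneg (hw x) _
    have h1 : 0 ≤ ∑' x, d x ^ p := tsum_nonneg fun x => Real.rpow_nonneg (hd x) _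
    have h2 : 0 ≤ 1 - 1 / p := by
      rw [← e1]; exact (one_div_pos.2 hconj.pos).le
    have h3 : 0 ≤ 1 / p := by positivity
    have h4 : 0 ≤ A := h0.trans hA
    gcongr

lemma summable_shift {N : ℕ} (f : ZN N → ℝ) (e : ZN N) (hf : Summable f) :
    (Summable fun x => f (x + e)) ∧ ∑' x, f (x + e) = ∑' x, f x :=
  ⟨(Equiv.addRight e).summable_iff.2 hf, (Equiv.addRight e).tsum_eq f⟩

/-- The self-improving form of the Sobolev inequality: the left side reappears on the right with the
exponent `(1 - 1/p) * N/(N-1)`, which is less than `1`. -/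
lemma critical_self_bound {N : ℕ} (hN : 2 ≤ N) {p : ℝ} (hp1 : 1 ≤ p) (hpN : p < N)
    (u : ZN N → ℝ) (hu : MemD p ((N : ℝ) * p / (N - p)) u) :
    ∑' x, |u x| ^ ((N : ℝ) * p / (N - p)) ≤
      (N * (p * (N - 1) / (N - p) * (2 *
        ((∑' x, |u x| ^ ((N : ℝ) * p / (N - p))) ^ (1 - 1 / p) * DSumPow p u ^ (1 / p)))))
        ^ ((N : ℝ) / (N - 1)) := by
  obtain ⟨hus, hug⟩ := hu
  have hN' : (1 : ℝ) < N := by exact_mod_cast hN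
  have hNp : 0 < (N : ℝ) - p := by linarith
  have hN1 : 0 < (N : ℝ) - 1 := by linarith
  have hp0 : 0 < p := by linarith
  set s : ℝ := (N : ℝ) * p / (N - p) with hs
  set γ : ℝ := p * (N - 1) / (N - p) with hγ
  set r : ℝ := (N : ℝ) / (N - 1) with hr
  set A := ∑' x, |u x| ^ s with hA
  set H := A ^ (1 - 1 / p) * DSumPow p u ^ (1 / p) with hH
  have hs0 : 0 < s := by positivity
  have hr0 : 0 < r := by positivity
  have hγ0 : 0 < γ := by positivity
  have hγ1 : 1 ≤ γ := by
    rw [hγ, le_div_iff₀ hNp]; nlinarith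
  have he : (γ - 1) * p = s * (p - 1) := by
    rw [hγ, hs]; field_simp; ring
  have hγr : γ * r = s := by
    rw [hγ, hs, hr]; field_simp
  have hus : Summable fun x => |u x| ^ s := hus
  have hA0 : 0 ≤ A := tsum_nonneg fun x => Real.rpow_nonneg (abs_nonneg _) _
  have hH0 : 0 ≤ H := mul_nonneg (Real.rpow_nonneg hA0 _)
    (Real.rpow_nonneg (tsum_nonneg (gradPow_nonneg p u)) _)
  have hv : Tendsto (fun x => |u x| ^ γ) cofinite (𝓝 0) := by
    have h := (hus.tendsto_cofinite_zero).rpow_const (p := γ / s) (Or.inr (by positivity))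
    rw [Real.zero_rpow (by positivity)] at h
    refine h.congr fun x => ?_
    rw [← Real.rpow_mul (abs_nonneg _)]
    congr 1
    field_simp
  have hdir : ∀ i : Fin N,
      ∑' x, ENNReal.ofReal |(|u (x + Pi.single i 1)| ^ γ - |u x| ^ γ)| ≤
        ENNReal.ofReal (γ * (2 * H)) := by
    intro i
    have hds : Summable fun x => |u (x + Pi.single i 1) - u x| ^ p :=
      Summable.of_nonneg_of_le (fun x => Real.rpow_nonneg (abs_nonneg _) _)
        (fun x => diff_rpow_le_gradPow p u x i) hug
    have hdD : ∑' x, |u (x + Pi.single i 1) - u x| ^ p ≤ DSumPow p u :=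
      hds.tsum_le_tsum (fun x => diff_rpow_le_gradPow p u x i) hug
    have h1 := holder_aux hp1 he (fun x => |u x|) (fun x => |u (x + Pi.single i 1) - u x|)
      (fun _ => abs_nonneg _) (fun _ => abs_nonneg _) hus hds le_rfl hdD
    have hshift : Summable (fun x => |u (x + Pi.single i 1)| ^ s) ∧
        ∑' x, |u (x + Pi.single i 1)| ^ s = A :=
      summable_shift (fun x => |u x| ^ s) (Pi.single i 1) hus
    have h2 := holder_aux hp1 he (fun x => |u (x + Pi.single i 1)|)
      (fun x => |u (x + Pi.single i 1) - u x|)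
      (fun _ => abs_nonneg _) (fun _ => abs_nonneg _)
      hshift.1 hds hshift.2.le hdD
    have hsum := (h2.1.add h1.1).mul_left γ
    have hpt : ∀ x, |(|u (x + Pi.single i 1)| ^ γ - |u x| ^ γ)| ≤
        γ * (|u (x + Pi.single i 1)| ^ (γ - 1) * |u (x + Pi.single i 1) - u x| +
          |u x| ^ (γ - 1) * |u (x + Pi.single i 1) - u x|) := by
      intro x
      refine (abs_rpow_sub_rpow_le (abs_nonneg _) (abs_nonneg _) hγ1).trans ?_
      have := abs_abs_sub_abs_le_abs_sub (u (x + Pi.single i 1)) (u x)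
      gcongr
    refine (ENNReal.tsum_le_tsum fun x => ENNReal.ofReal_le_ofReal (hpt x)).trans ?_
    rw [← ENNReal.ofReal_tsum_of_nonneg (fun x => (abs_nonneg _).trans (hpt x)) hsum]
    apply ENNReal.ofReal_le_ofReal
    rw [tsum_mul_left, h2.1.tsum_add h1.1]
    gcongr
    linarith [h1.2, h2.2]
  have hgns := tsum_rpow_le_gradient hN _ hv
  have hleft : ∑' x, ENNReal.ofReal |(|u x| ^ γ)| ^ r = ENNReal.ofReal A := by
    rw [hA, ENNReal.ofReal_tsum_of_nonneg (fun x => Real.rpow_nonneg (abs_nonneg _) _) hus]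
    congr 1
    ext x
    rw [abs_of_nonneg (Real.rpow_nonneg (abs_nonneg _) _),
      ENNReal.ofReal_rpow_of_nonneg (Real.rpow_nonneg (abs_nonneg _) _) hr0.le,
      ← Real.rpow_mul (abs_nonneg _), hγr]
  have hright : ∑' x, ∑ i : Fin N,
      ENNReal.ofReal |(|u (x + Pi.single i 1)| ^ γ - |u x| ^ γ)| ≤
        ENNReal.ofReal (N * (γ * (2 * H))) := by
    rw [Summable.tsum_finsetSum fun i _ => ENNReal.summable]
    refine (Finset.sum_le_sum fun i _ => hdir i).trans ?_
    rw [Finset.sum_const, Finset.card_univ, Fintype.card_fin, nsmul_eq_mul,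
      ENNReal.ofReal_mul (Nat.cast_nonneg N), ENNReal.ofReal_natCast]
  have hfin := hgns.trans (ENNReal.rpow_le_rpow hright hr0.le)
  rw [hleft, ENNReal.ofReal_rpow_of_nonneg (by positivity) hr0.le,
    ENNReal.ofReal_le_ofReal_iff (by positivity)] at hfin
  exact hfin

/-- Discrete Sobolev inequality: a bound on the `D^{1,p}` energy bounds the `ℓ^{p*}` mass. -/
lemma exists_critical_bound {N : ℕ} (hN : 2 ≤ N) {p : ℝ} (hp1 : 1 ≤ p) (hpN : p < N) (M : ℝ) :
    ∃ B : ℝ, 0 < B ∧ ∀ u : ZN N → ℝ, MemD p ((N : ℝ) * p / (N - p)) u → DSumPow p u ≤ M →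
      ∑' x, |u x| ^ ((N : ℝ) * p / (N - p)) ≤ B := by
  have hN' : (1 : ℝ) < N := by exact_mod_cast hN
  have hNp : 0 < (N : ℝ) - p := by linarith
  have hN1 : 0 < (N : ℝ) - 1 := by linarith
  have hp0 : 0 < p := by linarith
  have hr0 : 0 < (N : ℝ) / (N - 1) := by positivity
  have hp' : 0 ≤ 1 / p := by positivity
  set r : ℝ := (N : ℝ) / (N - 1) with hr
  set θ : ℝ := (1 - 1 / p) * r with hθ
  have hθ1 : 0 < 1 - θ := by
    have : 1 - θ = (N - p) / ((N - 1) * p) := by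
      rw [hθ, hr]; field_simp; ring
    rw [this]; positivity
  set c : ℝ := N * (p * (N - 1) / (N - p) * (2 * M ^ (1 / p))) with hc
  refine ⟨max 1 ((c ^ r) ^ (1 / (1 - θ))), lt_max_of_lt_left one_pos, fun u hu hM => ?_⟩
  have hD0 : 0 ≤ DSumPow p u := tsum_nonneg (gradPow_nonneg p u)
  have hM0 : 0 ≤ M := hD0.trans hM
  have hself := critical_self_bound hN hp1 hpN u hu
  set A := ∑' x, |u x| ^ ((N : ℝ) * p / (N - p)) with hA
  have hA0 : 0 ≤ A := tsum_nonneg fun x => Real.rpow_nonneg (abs_nonneg _) _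
  rcases hA0.eq_or_lt with h0 | hApos
  · rw [← h0]; exact le_max_of_le_left zero_le_one
  refine le_max_of_le_right ?_
  have hc0 : 0 ≤ c := by positivity
  have h1 : A ≤ c ^ r * A ^ θ := by
    calc A ≤ _ := hself
      _ ≤ (c * A ^ (1 - 1 / p)) ^ r := by
        refine Real.rpow_le_rpow (by positivity) ?_ hr0.le
        have hMp : DSumPow p u ^ (1 / p) ≤ M ^ (1 / p) := Real.rpow_le_rpow hD0 hM hp'
        calc _ ≤ N * (p * (N - 1) / (N - p) * (2 * (A ^ (1 - 1 / p) * M ^ (1 / p)))) := by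
              gcongr
          _ = _ := by rw [hc]; ring
      _ = c ^ r * A ^ θ := by
        rw [Real.mul_rpow hc0 (by positivity), ← Real.rpow_mul hA0]
  have h2 : A ^ (1 - θ) ≤ c ^ r := by
    rw [Real.rpow_sub hApos, Real.rpow_one, div_le_iff₀ (by positivity)]
    exact h1
  calc A = (A ^ (1 - θ)) ^ (1 / (1 - θ)) := by
        rw [← Real.rpow_mul hA0, mul_one_div_cancel hθ1.ne', Real.rpow_one]
    _ ≤ _ := Real.rpow_le_rpow (by positivity) h2 (by positivity)

/-! ### Interpolation with the supremum norm -/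

/-- If `‖u‖_q = 1`, `s < q` and `∑ |u|^s ≤ B`, then `B^{-1/(q-s)} ≤ ‖u‖_∞ ≤ 1`. -/
lemma supNorm_bounds {N : ℕ} {s q B : ℝ} (hs : 0 < s) (hsq : s < q) (hB : 0 < B)
    (u : ZN N → ℝ) (hus : Memlp s u) (hu1 : lpNorm q u = 1) (huB : ∑' x, |u x| ^ s ≤ B) :
    (1 / B) ^ (1 / (q - s)) ≤ supNorm u ∧ supNorm u ≤ 1 := by
  have hq : 0 < q := hs.trans hsq
  have hus : Summable fun x => |u x| ^ s := hus
  have hT0 : 0 ≤ ∑' x, |u x| ^ q := tsum_nonneg fun x => Real.rpow_nonneg (abs_nonneg _) _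
  have hT : ∑' x, |u x| ^ q = 1 := by
    have h : (∑' x, |u x| ^ q) ^ (1 / q) = 1 := hu1
    calc ∑' x, |u x| ^ q = ((∑' x, |u x| ^ q) ^ (1 / q)) ^ q := by
          rw [← Real.rpow_mul hT0, one_div_mul_cancel hq.ne', Real.rpow_one]
      _ = 1 := by rw [h, Real.one_rpow]
  -- A divergent sum has junk value `0`, so the normalization forces summability.
  have huq : Summable fun x => |u x| ^ q := by
    by_contra h
    rw [tsum_eq_zero_of_not_summable h] at hT
    exact zero_ne_one hT
  have hle1 : ∀ x, |u x| ≤ 1 := by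
    intro x
    have h := huq.le_tsum x fun _ _ => Real.rpow_nonneg (abs_nonneg _) _
    rw [hT] at h
    by_contra! hlt
    exact absurd h (not_le.2 (Real.one_lt_rpow hlt hq))
  have hbdd : BddAbove (Set.range fun x => |u x|) := ⟨1, by rintro _ ⟨x, rfl⟩; exact hle1 x⟩
  have hle : ∀ x, |u x| ≤ supNorm u := fun x => le_ciSup hbdd x
  have h0 : 0 ≤ supNorm u := (abs_nonneg _).trans (hle 0)
  have hqs : 0 < q - s := sub_pos.2 hsq
  refine ⟨?_, ciSup_le hle1⟩
  have hpt : ∀ x, |u x| ^ q ≤ supNorm u ^ (q - s) * |u x| ^ s := by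
    intro x
    calc |u x| ^ q = |u x| ^ (q - s) * |u x| ^ s := by
          rw [← Real.rpow_add_of_nonneg (abs_nonneg _) hqs.le hs.le, sub_add_cancel]
      _ ≤ _ := by
          gcongr
          exact hle x
  have h1 : 1 ≤ supNorm u ^ (q - s) * B := by
    calc (1 : ℝ) = ∑' x, |u x| ^ q := hT.symm
      _ ≤ ∑' x, supNorm u ^ (q - s) * |u x| ^ s := huq.tsum_le_tsum hpt (hus.mul_left _)
      _ = supNorm u ^ (q - s) * ∑' x, |u x| ^ s := tsum_mul_left
      _ ≤ _ := by gcongr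
  have h2 : 1 / B ≤ supNorm u ^ (q - s) := by rwa [div_le_iff₀ hB]
  calc (1 / B) ^ (1 / (q - s)) ≤ (supNorm u ^ (q - s)) ^ (1 / (q - s)) :=
        Real.rpow_le_rpow (by positivity) h2 (by positivity)
    _ = supNorm u := by
        rw [← Real.rpow_mul h0, mul_one_div_cancel hqs.ne', Real.rpow_one]

/-- a minimizing sequence for the supercritical discrete Sobolev
constant has `liminf ‖u_n‖_∞ > 0`. -/
theorem stmt12 (N : ℕ) (hN : 3 ≤ N) (p q : ℝ) (hp1 : 1 ≤ p) (hpN : p < (N : ℝ))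
    (hq : (N : ℝ) * p / ((N : ℝ) - p) < q)
    (S : ℝ)
    (hS : S = sInf {t : ℝ | ∃ u : ZN N → ℝ,
        MemD p ((N : ℝ) * p / ((N : ℝ) - p)) u ∧ lpNorm q u = 1 ∧ t = DSumPow p u})
    (u : ℕ → ZN N → ℝ)
    (hmem : ∀ n, MemD p ((N : ℝ) * p / ((N : ℝ) - p)) (u n))
    (hnorm : ∀ n, lpNorm q (u n) = 1)
    (hmin : Tendsto (fun n => DSumPow p (u n)) atTop (𝓝 S)) :
    0 < Filter.liminf (fun n => supNorm (u n)) atTop := by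
  have hs : 0 < (N : ℝ) * p / ((N : ℝ) - p) := by
    have : 0 < (N : ℝ) - p := by linarith
    have : 0 < p := by linarith
    have : (0 : ℝ) < N := by linarith
    positivity
  obtain ⟨B, hB, hbound⟩ := exists_critical_bound (by omega : 2 ≤ N) hp1 hpN (S + 1)
  have hev : ∀ᶠ n in atTop, DSumPow p (u n) ≤ S + 1 :=
    (hmin.eventually_lt_const (lt_add_one S)).mono fun n hn => hn.le
  have hboth : ∀ᶠ n in atTop,
      (1 / B) ^ (1 / (q - (N : ℝ) * p / ((N : ℝ) - p))) ≤ supNorm (u n) ∧ supNorm (u n) ≤ 1 :=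
    hev.mono fun n hn => supNorm_bounds hs hq hB (u n) (hmem n).1 (hnorm n)
      (hbound (u n) (hmem n) hn)
  have hpos : 0 < (1 / B) ^ (1 / (q - (N : ℝ) * p / ((N : ℝ) - p))) := by positivity
  -- The upper bound `1` is what makes the real-valued `liminf` a genuine supremum.
  refine hpos.trans_le (le_liminf_of_le ?_ (hboth.mono fun n hn => hn.1))
  exact (isBoundedUnder_of_eventually_le (hboth.mono fun n hn => hn.2)).isCoboundedUnder_ge
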